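/- On an almost quaternion-Hermitian 4n-manifold, for any local adapted basis I,J,K the one-form Iλ_I is determined by the exterior derivatives of the Kähler forms: 2n·Iλ_I = IΛ_K dω_J + JΛ_K dω_I + JΛ_I dω_K = IΛ_K dω_J + Λ_I dω_I − Λ_K dω_K, together with the formulas obtained by cyclic permutation of (I,J,K). -/

import Mathlib

/-!  Synthetic (Koszul-style) model of an almost quaternion-Hermitian `4n`-manifold.

`C` plays the role of the commutative ℝ-algebra of smooth functions and `V` that of
the `C`-module of vector fields, equipped with a directional derivative `D`, a Lie
bracket, a Riemannian metric `g` together with its Levi-Civita connection `nab`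
(characterised by being torsion-free and metric), a local adapted basis `I, J, K`
of anticommuting almost complex structures with `K = I J`, each compatible with the
metric, and a (local) orthonormal frame.  -/

noncomputable section

open scoped BigOperators

structure AQH (n : ℕ) (C : Type*) (V : Type*) [CommRing C] [Algebra ℝ C]
    [AddCommGroup V] [Module C V] where
  /-- derivative of a function along a vector field -/
  D : V → C → C
  D_add : ∀ X f g, D X (f + g) = D X f + D X g
  D_mul : ∀ X f g, D X (f * g) = f * D X g + g * D X f
  D_const : ∀ X (r : ℝ), D X (algebraMap ℝ C r) = 0
  D_addX : ∀ X Y f, D (X + Y) f = D X f + D Y f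
  D_smulX : ∀ (f : C) (X : V) (h : C), D (f • X) h = f * D X h
  /-- the Lie bracket of vector fields -/
  bracket : V → V → V
  bracket_skew : ∀ X Y, bracket X Y = -bracket Y X
  bracket_add : ∀ X Y Z, bracket X (Y + Z) = bracket X Y + bracket X Z
  bracket_smul : ∀ X (f : C) Y, bracket X (f • Y) = f • bracket X Y + (D X f) • Y
  bracket_jacobi : ∀ X Y Z,
    bracket X (bracket Y Z) + bracket Y (bracket Z X) + bracket Z (bracket X Y) = 0
  D_bracket : ∀ X Y f, D (bracket X Y) f = D X (D Y f) - D Y (D X f)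
  /-- the Riemannian metric -/
  g : V → V → C
  g_symm : ∀ X Y, g X Y = g Y X
  g_add : ∀ X Y Z, g (X + Y) Z = g X Z + g Y Z
  g_smul : ∀ (f : C) X Y, g (f • X) Y = f * g X Y
  /-- the Levi-Civita connection -/
  nab : V → V → V
  nab_addX : ∀ X Y Z, nab (X + Y) Z = nab X Z + nab Y Z
  nab_smulX : ∀ (f : C) X Y, nab (f • X) Y = f • nab X Y
  nab_add : ∀ X Y Z, nab X (Y + Z) = nab X Y + nab X Z
  nab_leibniz : ∀ X (f : C) Y, nab X (f • Y) = f • nab X Y + (D X f) • Y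
  torsion_free : ∀ X Y, nab X Y - nab Y X = bracket X Y
  nab_metric : ∀ X Y Z, D X (g Y Z) = g (nab X Y) Z + g Y (nab X Z)
  /-- the (local) adapted basis of almost complex structures -/
  I : V → V
  J : V → V
  K : V → V
  I_lin : ∀ (f : C) X Y, I (f • X + Y) = f • I X + I Y
  J_lin : ∀ (f : C) X Y, J (f • X + Y) = f • J X + J Y
  K_lin : ∀ (f : C) X Y, K (f • X + Y) = f • K X + K Y
  I_sq : ∀ X, I (I X) = -X
  J_sq : ∀ X, J (J X) = -X
  K_def : ∀ X, K X = I (J X)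
  anticomm : ∀ X, I (J X) = -J (I X)
  I_metric : ∀ X Y, g (I X) (I Y) = g X Y
  J_metric : ∀ X Y, g (J X) (J Y) = g X Y
  /-- a (local) orthonormal frame -/
  frame : Fin (4 * n) → V
  frame_orthonormal : ∀ i j, g (frame i) (frame j) = if i = j then 1 else 0
  frame_span : ∀ X, X = ∑ i, g X (frame i) • frame i

namespace AQH

section ops

variable {C V : Type*} [CommRing C]

/-- the operator `A_(1)` on covariant 3-tensors -/
def op1 (A : V → V) (ψ : V → V → V → C) : V → V → V → C := fun X Y Z => -ψ (A X) Y Z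

/-- the operator `A_(2)` on covariant 3-tensors -/
def op2 (A : V → V) (ψ : V → V → V → C) : V → V → V → C := fun X Y Z => -ψ X (A Y) Z

/-- the operator `A_(3)` on covariant 3-tensors -/
def op3 (A : V → V) (ψ : V → V → V → C) : V → V → V → C := fun X Y Z => -ψ X Y (A Z)

/-- the operator `A_(12) = A_(1) A_(2)` on covariant 3-tensors -/
def op12 (A : V → V) (ψ : V → V → V → C) : V → V → V → C := fun X Y Z => ψ (A X) (A Y) Z

/-- the operator `A_(13) = A_(1) A_(3)` on covariant 3-tensors -/
def op13 (A : V → V) (ψ : V → V → V → C) : V → V → V → C := fun X Y Z => ψ (A X) Y (A Z)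

/-- the operator `A_(23) = A_(2) A_(3)` on covariant 3-tensors -/
def op23 (A : V → V) (ψ : V → V → V → C) : V → V → V → C := fun X Y Z => ψ X (A Y) (A Z)

/-- the operator `𝓛_A = A_(12) + A_(13) + A_(23)` on three-forms -/
def calL (A : V → V) (ψ : V → V → V → C) : V → V → V → C :=
  fun X Y Z => op12 A ψ X Y Z + op13 A ψ X Y Z + op23 A ψ X Y Z

/-- the action `(A ν)(X) = -ν (A X)` of `A` on a one-form -/
def act1 (A : V → V) (ν : V → C) : V → C := fun X => -ν (A X)

/-- the action `(A ψ)(X,Y,Z) = -ψ(AX,AY,AZ)` of `A` on a three-form -/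
def act3 (A : V → V) (ψ : V → V → V → C) : V → V → V → C :=
  fun X Y Z => -ψ (A X) (A Y) (A Z)

/-- wedge product of two one-forms -/
def wedge11 (α β : V → C) : V → V → C := fun X Y => α X * β Y - α Y * β X

/-- wedge product of a one-form and a two-form -/
def wedge12 (ν : V → C) (ω : V → V → C) : V → V → V → C :=
  fun X Y Z => ν X * ω Y Z - ν Y * ω X Z + ν Z * ω X Y

/-- wedge product of two two-forms -/
def wedge22 (α β : V → V → C) : V → V → V → V → C := fun X Y Z W =>
  α X Y * β Z W - α X Z * β Y W + α X W * β Y Z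
    + α Z W * β X Y - α Y W * β X Z + α Y Z * β X W

/-- a (0,3)-tensor is an alternating three-form -/
def IsAlt3 (T : V → V → V → C) : Prop :=
  (∀ X Y Z, T Y X Z = -T X Y Z) ∧ (∀ X Y Z, T X Z Y = -T X Y Z)

variable [AddCommGroup V] [Module C V]

/-- `C`-linearity (tensoriality) of a three-form in its first argument -/
def Lin3 (T : V → V → V → C) : Prop :=
  ∀ (f : C) X X' Y Z, T (f • X + X') Y Z = f * T X Y Z + T X' Y Z

/-- `C`-linearity (tensoriality) of a one-form -/
def Lin1 (ν : V → C) : Prop := ∀ (f : C) X X', ν (f • X + X') = f * ν X + ν X'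

end ops

section derived

variable {n : ℕ} {C V : Type*} [CommRing C] [Algebra ℝ C] [AddCommGroup V] [Module C V]
  [Module ℝ V] [IsScalarTower ℝ C V]

variable (M : AQH n C V)

/-- the Kähler form `ω_A(X,Y) = g(X, A Y)` -/
def omega (A : V → V) : V → V → C := fun X Y => M.g X (A Y)

/-- `(∇_X A) Y` -/
def nabA (A : V → V) : V → V → V := fun X Y => M.nab X (A Y) - A (M.nab X Y)

/-- covariant derivative of a 2-form: `(∇_X ψ)(Y,Z)` -/
def nab2 (ψ : V → V → C) : V → V → V → C :=
  fun X Y Z => M.D X (ψ Y Z) - ψ (M.nab X Y) Z - ψ Y (M.nab X Z)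

/-- covariant derivative of a 4-form -/
def nab4 (ψ : V → V → V → V → C) : V → V → V → V → V → C :=
  fun X Y Z W U => M.D X (ψ Y Z W U) - ψ (M.nab X Y) Z W U - ψ Y (M.nab X Z) W U
    - ψ Y Z (M.nab X W) U - ψ Y Z W (M.nab X U)

/-- exterior derivative of a one-form -/
def d1 (ν : V → C) : V → V → C :=
  fun X Y => M.D X (ν Y) - M.D Y (ν X) - ν (M.bracket X Y)

/-- exterior derivative of a two-form -/
def d2 (ψ : V → V → C) : V → V → V → C :=
  fun X Y Z => M.D X (ψ Y Z) - M.D Y (ψ X Z) + M.D Z (ψ X Y)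
    - ψ (M.bracket X Y) Z + ψ (M.bracket X Z) Y - ψ (M.bracket Y Z) X

/-- exterior derivative of a four-form -/
def d4 (ψ : V → V → V → V → C) : V → V → V → V → V → C := fun X Y Z W U =>
  M.D X (ψ Y Z W U) - M.D Y (ψ X Z W U) + M.D Z (ψ X Y W U) - M.D W (ψ X Y Z U)
      + M.D U (ψ X Y Z W)
    - ψ (M.bracket X Y) Z W U + ψ (M.bracket X Z) Y W U - ψ (M.bracket X W) Y Z U
      + ψ (M.bracket X U) Y Z W
    - ψ (M.bracket Y Z) X W U + ψ (M.bracket Y W) X Z U - ψ (M.bracket Y U) X Z W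
    - ψ (M.bracket Z W) X Y U + ψ (M.bracket Z U) X Y W
    - ψ (M.bracket W U) X Y Z

/-- the Nijenhuis tensor `N_A(X,Y)` -/
def nijV (A : V → V) : V → V → V := fun X Y =>
  M.bracket X Y + A (M.bracket (A X) Y) + A (M.bracket X (A Y)) - M.bracket (A X) (A Y)

/-- the Nijenhuis `(0,3)`-tensor `N_A(X,Y,Z) = g(X, N_A(Y,Z))` -/
def nij3 (A : V → V) : V → V → V → C := fun X Y Z => M.g X (M.nijV A Y Z)

/-- the induced inner product of two 2-forms,
`⟨ψ,φ⟩ = (1/2!) ψ(e_i,e_j) φ(e_i,e_j)` -/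
def inner2 (ψ φ : V → V → C) : C :=
  (1/2 : ℝ) • ∑ i, ∑ j, ψ (M.frame i) (M.frame j) * φ (M.frame i) (M.frame j)

/-- the contraction `(Λ_A β)(X) = ⟨X ⌟ β, ω_A⟩` of a three-form -/
def Lam (A : V → V) (β : V → V → V → C) : V → C :=
  fun X => (1/2 : ℝ) •
    ∑ i, ∑ j, β X (M.frame i) (M.frame j) * M.omega A (M.frame i) (M.frame j)

/-- `λ_I(X) = (1/2n) ⟨∇_X ω_J, ω_K⟩` -/
def lambdaI : V → C := fun X =>
  (1/(2*(n:ℝ))) • M.inner2 (fun Y Z => M.nab2 (M.omega M.J) X Y Z) (M.omega M.K)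

/-- `λ_J(X) = (1/2n) ⟨∇_X ω_K, ω_I⟩` -/
def lambdaJ : V → C := fun X =>
  (1/(2*(n:ℝ))) • M.inner2 (fun Y Z => M.nab2 (M.omega M.K) X Y Z) (M.omega M.I)

/-- `λ_K(X) = (1/2n) ⟨∇_X ω_I, ω_J⟩` -/
def lambdaK : V → C := fun X =>
  (1/(2*(n:ℝ))) • M.inner2 (fun Y Z => M.nab2 (M.omega M.I) X Y Z) (M.omega M.J)

/-- codifferential of a two-form -/
def codiff2 (ψ : V → V → C) : V → C := fun Z => -∑ i, M.nab2 ψ (M.frame i) (M.frame i) Z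

/-- codifferential of a four-form -/
def codiff4 (ψ : V → V → V → V → C) : V → V → V → C :=
  fun X Y Z => -∑ i, M.nab4 ψ (M.frame i) (M.frame i) X Y Z

/-- `β_I = J dω_J + K dω_K` -/
def betaI : V → V → V → C := fun X Y Z =>
  act3 M.J (M.d2 (M.omega M.J)) X Y Z + act3 M.K (M.d2 (M.omega M.K)) X Y Z

/-- `β_J = K dω_K + I dω_I` -/
def betaJ : V → V → V → C := fun X Y Z =>
  act3 M.K (M.d2 (M.omega M.K)) X Y Z + act3 M.I (M.d2 (M.omega M.I)) X Y Z

/-- `β_K = I dω_I + J dω_J` -/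
def betaK : V → V → V → C := fun X Y Z =>
  act3 M.I (M.d2 (M.omega M.I)) X Y Z + act3 M.J (M.d2 (M.omega M.J)) X Y Z

/-- the intrinsic torsion
`ξ_X Y = -(1/4) Σ_A A (∇_X A) Y + (1/2) Σ_A λ_A(X) A Y` -/
def xi : V → V → V := fun X Y =>
  (-(1/4 : ℝ)) • (M.I (M.nabA M.I X Y) + M.J (M.nabA M.J X Y) + M.K (M.nabA M.K X Y))
    + (1/2 : ℝ) • (M.lambdaI X • M.I Y + M.lambdaJ X • M.J Y + M.lambdaK X • M.K Y)

/-- the one-form `ν^I_4 = I Λ_I β_I` -/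
def nu4I : V → C := act1 M.I (M.Lam M.I M.betaI)

/-- the one-form `ν^J_4 = J Λ_J β_J` -/
def nu4J : V → C := act1 M.J (M.Lam M.J M.betaJ)

/-- the one-form `ν^K_4 = K Λ_K β_K` -/
def nu4K : V → C := act1 M.K (M.Lam M.K M.betaK)

/-- `ν^I_3`, determined by `J Λ_J β_I = (1/(2n-1)) (ν^I_4 + (2n+1)(n-1) ν^I_3)` -/
def nu3I : V → C := fun X =>
  (1/((2*(n:ℝ)+1) * ((n:ℝ)-1))) •
    ((2*(n:ℝ)-1) • act1 M.J (M.Lam M.J M.betaI) X - M.nu4I X)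

/-- `ν^J_3`, determined by `K Λ_K β_J = (1/(2n-1)) (ν^J_4 + (2n+1)(n-1) ν^J_3)` -/
def nu3J : V → C := fun X =>
  (1/((2*(n:ℝ)+1) * ((n:ℝ)-1))) •
    ((2*(n:ℝ)-1) • act1 M.K (M.Lam M.K M.betaJ) X - M.nu4J X)

/-- `ν^K_3`, determined by `I Λ_I β_K = (1/(2n-1)) (ν^K_4 + (2n+1)(n-1) ν^K_3)` -/
def nu3K : V → C := fun X =>
  (1/((2*(n:ℝ)+1) * ((n:ℝ)-1))) •
    ((2*(n:ℝ)-1) • act1 M.I (M.Lam M.I M.betaK) X - M.nu4K X)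

/-- `β^{(E)}_{3I} = -(1/2) Jν^I_3 ∧ ω_J - (1/2) Kν^I_3 ∧ ω_K + (1/(2n-1)) Iν^I_3 ∧ ω_I` -/
def betaE3I : V → V → V → C := fun X Y Z =>
  (-(1/2:ℝ)) • wedge12 (act1 M.J M.nu3I) (M.omega M.J) X Y Z
    + (-(1/2:ℝ)) • wedge12 (act1 M.K M.nu3I) (M.omega M.K) X Y Z
    + (1/(2*(n:ℝ)-1)) • wedge12 (act1 M.I M.nu3I) (M.omega M.I) X Y Z

def betaE3J : V → V → V → C := fun X Y Z =>
  (-(1/2:ℝ)) • wedge12 (act1 M.K M.nu3J) (M.omega M.K) X Y Z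
    + (-(1/2:ℝ)) • wedge12 (act1 M.I M.nu3J) (M.omega M.I) X Y Z
    + (1/(2*(n:ℝ)-1)) • wedge12 (act1 M.J M.nu3J) (M.omega M.J) X Y Z

def betaE3K : V → V → V → C := fun X Y Z =>
  (-(1/2:ℝ)) • wedge12 (act1 M.I M.nu3K) (M.omega M.I) X Y Z
    + (-(1/2:ℝ)) • wedge12 (act1 M.J M.nu3K) (M.omega M.J) X Y Z
    + (1/(2*(n:ℝ)-1)) • wedge12 (act1 M.K M.nu3K) (M.omega M.K) X Y Z

/-- `β_{4I} = -(1/(2n-1)) Iν^I_4 ∧ ω_I` -/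
def beta4I : V → V → V → C := fun X Y Z =>
  (-(1/(2*(n:ℝ)-1))) • wedge12 (act1 M.I M.nu4I) (M.omega M.I) X Y Z

def beta4J : V → V → V → C := fun X Y Z =>
  (-(1/(2*(n:ℝ)-1))) • wedge12 (act1 M.J M.nu4J) (M.omega M.J) X Y Z

def beta4K : V → V → V → C := fun X Y Z =>
  (-(1/(2*(n:ℝ)-1))) • wedge12 (act1 M.K M.nu4K) (M.omega M.K) X Y Z

/-- `β_I^{(3+K)} = β_I - β^{(E)}_{3I} - β_{4I}` -/
def beta3KI : V → V → V → C := fun X Y Z => M.betaI X Y Z - M.betaE3I X Y Z - M.beta4I X Y Z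

def beta3KJ : V → V → V → C := fun X Y Z => M.betaJ X Y Z - M.betaE3J X Y Z - M.beta4J X Y Z

def beta3KK : V → V → V → C := fun X Y Z => M.betaK X Y Z - M.betaE3K X Y Z - M.beta4K X Y Z

/-- `β_I^{(3)} = (1/6) (2 - 𝓛_J - 𝓛_K) β_I^{(3+K)}` -/
def beta3I : V → V → V → C := fun X Y Z =>
  (1/6:ℝ) • ((2:ℝ) • M.beta3KI X Y Z - calL M.J M.beta3KI X Y Z - calL M.K M.beta3KI X Y Z)

def beta3J : V → V → V → C := fun X Y Z =>
  (1/6:ℝ) • ((2:ℝ) • M.beta3KJ X Y Z - calL M.K M.beta3KJ X Y Z - calL M.I M.beta3KJ X Y Z)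

def beta3K : V → V → V → C := fun X Y Z =>
  (1/6:ℝ) • ((2:ℝ) • M.beta3KK X Y Z - calL M.I M.beta3KK X Y Z - calL M.J M.beta3KK X Y Z)

/-- `β_I^{(K)} = (1/6) (4 + 𝓛_J + 𝓛_K) β_I^{(3+K)}` -/
def betaKI : V → V → V → C := fun X Y Z =>
  (1/6:ℝ) • ((4:ℝ) • M.beta3KI X Y Z + calL M.J M.beta3KI X Y Z + calL M.K M.beta3KI X Y Z)

def betaKJ : V → V → V → C := fun X Y Z =>
  (1/6:ℝ) • ((4:ℝ) • M.beta3KJ X Y Z + calL M.K M.beta3KJ X Y Z + calL M.I M.beta3KJ X Y Z)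

def betaKK : V → V → V → C := fun X Y Z =>
  (1/6:ℝ) • ((4:ℝ) • M.beta3KK X Y Z + calL M.I M.beta3KK X Y Z + calL M.J M.beta3KK X Y Z)

/-- the three-form `ψ^{(3)} = (1/12)(β_I^{(3)} + β_J^{(3)} + β_K^{(3)})` determining `ξ_{33}` -/
def psi3 : V → V → V → C := fun X Y Z =>
  (1/12:ℝ) • (M.beta3I X Y Z + M.beta3J X Y Z + M.beta3K X Y Z)

/-- the three-form `ψ^{(K)} = -(1/48)(β_I^{(K)} + β_J^{(K)} + β_K^{(K)})` determining `ξ_{KH}` -/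
def psiK : V → V → V → C := fun X Y Z =>
  (-(1/48:ℝ)) • (M.betaKI X Y Z + M.betaKJ X Y Z + M.betaKK X Y Z)

/-- the three-form `ψ^{(3)}_I` determining `ξ_{3H}` -/
def psi3I : V → V → V → C := fun X Y Z =>
  (-(1/8:ℝ)) • M.beta3I X Y Z
    + (1/48:ℝ) • ((3:ℝ) • (M.beta3I X Y Z + M.beta3J X Y Z + M.beta3K X Y Z)
        + calL M.I (fun a b c => M.beta3I a b c + M.beta3J a b c + M.beta3K a b c) X Y Z)

def psi3J : V → V → V → C := fun X Y Z =>
  (-(1/8:ℝ)) • M.beta3J X Y Z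
    + (1/48:ℝ) • ((3:ℝ) • (M.beta3I X Y Z + M.beta3J X Y Z + M.beta3K X Y Z)
        + calL M.J (fun a b c => M.beta3I a b c + M.beta3J a b c + M.beta3K a b c) X Y Z)

def psi3K : V → V → V → C := fun X Y Z =>
  (-(1/8:ℝ)) • M.beta3K X Y Z
    + (1/48:ℝ) • ((3:ℝ) • (M.beta3I X Y Z + M.beta3J X Y Z + M.beta3K X Y Z)
        + calL M.K (fun a b c => M.beta3I a b c + M.beta3J a b c + M.beta3K a b c) X Y Z)

/-- the three-form `ψ^{(K)}_I` determining `ξ_{K3}` -/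
def psiKI : V → V → V → C := fun X Y Z =>
  (-(1/2:ℝ)) • M.betaKI X Y Z
    + (1/6:ℝ) • (M.betaKI X Y Z + M.betaKJ X Y Z + M.betaKK X Y Z)

def psiKJ : V → V → V → C := fun X Y Z =>
  (-(1/2:ℝ)) • M.betaKJ X Y Z
    + (1/6:ℝ) • (M.betaKI X Y Z + M.betaKJ X Y Z + M.betaKK X Y Z)

def psiKK : V → V → V → C := fun X Y Z =>
  (-(1/2:ℝ)) • M.betaKK X Y Z
    + (1/6:ℝ) • (M.betaKI X Y Z + M.betaKJ X Y Z + M.betaKK X Y Z)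

/-- the one-form `θ^ξ` determining `ξ_{EH}`,
defined by `(6/n)(2n+1)(n-1) θ^ξ(X) = -⟨ξ_{e_i} e_i, X⟩` -/
def thetaXi : V → C := fun X =>
  (-((n:ℝ)/(6*(2*(n:ℝ)+1)*((n:ℝ)-1)))) • ∑ i, M.g (M.xi (M.frame i) (M.frame i)) X

/-- the local one-form `θ^ξ_I`, defined by `(2/n)(2n+1)(n-1) θ^ξ_I(X) = -⟨I ξ_{e_i} I e_i, X⟩` -/
def thetaXiI : V → C := fun X =>
  (-((n:ℝ)/(2*(2*(n:ℝ)+1)*((n:ℝ)-1)))) •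
    ∑ i, M.g (M.I (M.xi (M.frame i) (M.I (M.frame i)))) X

def thetaXiJ : V → C := fun X =>
  (-((n:ℝ)/(2*(2*(n:ℝ)+1)*((n:ℝ)-1)))) •
    ∑ i, M.g (M.J (M.xi (M.frame i) (M.J (M.frame i)))) X

def thetaXiK : V → C := fun X =>
  (-((n:ℝ)/(2*(2*(n:ℝ)+1)*((n:ℝ)-1)))) •
    ∑ i, M.g (M.K (M.xi (M.frame i) (M.K (M.frame i)))) X

/-- `α_I = -λ_I ⊗ g + (1/2)(J_(2) - J_(3)) ∇ω_K` -/
def alphaI : V → V → V → C := fun X Y Z =>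
  -(M.lambdaI X * M.g Y Z)
    + (1/2:ℝ) • (-(M.nab2 (M.omega M.K) X (M.J Y) Z) + M.nab2 (M.omega M.K) X Y (M.J Z))

def alphaJ : V → V → V → C := fun X Y Z =>
  -(M.lambdaJ X * M.g Y Z)
    + (1/2:ℝ) • (-(M.nab2 (M.omega M.I) X (M.K Y) Z) + M.nab2 (M.omega M.I) X Y (M.K Z))

def alphaK : V → V → V → C := fun X Y Z =>
  -(M.lambdaK X * M.g Y Z)
    + (1/2:ℝ) • (-(M.nab2 (M.omega M.J) X (M.I Y) Z) + M.nab2 (M.omega M.J) X Y (M.I Z))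

/-- the one-form `η_I(X) = α_I(e_i; e_i, X)` -/
def etaI : V → C := fun X => ∑ i, M.alphaI (M.frame i) (M.frame i) X

def etaJ : V → C := fun X => ∑ i, M.alphaJ (M.frame i) (M.frame i) X

def etaK : V → C := fun X => ∑ i, M.alphaK (M.frame i) (M.frame i) X

/-- the fundamental four-form `Ω = Σ_A ω_A ∧ ω_A` -/
def Omega4 : V → V → V → V → C := fun X Y Z W =>
  wedge22 (M.omega M.I) (M.omega M.I) X Y Z W
    + wedge22 (M.omega M.J) (M.omega M.J) X Y Z W
    + wedge22 (M.omega M.K) (M.omega M.K) X Y Z W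

/-- the one-form `θ^{d*Ω} = (1/3) Σ_A A Λ_A d*Ω` -/
def thetaDOmega : V → C := fun X =>
  (1/3:ℝ) • (act1 M.I (M.Lam M.I (M.codiff4 M.Omega4)) X
    + act1 M.J (M.Lam M.J (M.codiff4 M.Omega4)) X
    + act1 M.K (M.Lam M.K (M.codiff4 M.Omega4)) X)

/-- the vector-valued torsion: `g(W, T(X,Y)) = T(W,X,Y)` -/
def Tvec (T : V → V → V → C) : V → V → V := fun X Y => ∑ i, T (M.frame i) X Y • M.frame i

/-- the connection `∇ + (1/2) T` associated to a torsion (0,3)-tensor `T` -/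
def nabT (T : V → V → V → C) : V → V → V := fun X Y => M.nab X Y + (1/2:ℝ) • M.Tvec T X Y

/-- a connection is metric -/
def MetricConn (nab' : V → V → V) : Prop :=
  ∀ X Y Z, M.D X (M.g Y Z) = M.g (nab' X Y) Z + M.g Y (nab' X Z)

/-- a connection is quaternionic, with associated local one-forms `γ_I, γ_J, γ_K`:
`∇'_X I = γ_K(X) J - γ_J(X) K`, and cyclically -/
def QuatConn (nab' : V → V → V) (γI γJ γK : V → C) : Prop :=
  (∀ X Y, nab' X (M.I Y) - M.I (nab' X Y) = γK X • M.J Y - γJ X • M.K Y) ∧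
  (∀ X Y, nab' X (M.J Y) - M.J (nab' X Y) = γI X • M.K Y - γK X • M.I Y) ∧
  (∀ X Y, nab' X (M.K Y) - M.K (nab' X Y) = γJ X • M.I Y - γI X • M.J Y)

/-- the HKT condition: `I, J, K` integrable and there is a metric connection
`∇ + (1/2)T` with totally skew torsion making `I, J, K` parallel -/
def IsHKT : Prop :=
  (∀ X Y, M.nijV M.I X Y = 0) ∧ (∀ X Y, M.nijV M.J X Y = 0) ∧
  (∀ X Y, M.nijV M.K X Y = 0) ∧
  ∃ T : V → V → V → C, IsAlt3 T ∧ Lin3 T ∧ M.MetricConn (M.nabT T) ∧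
    (∀ X Y, M.nabT T X (M.I Y) = M.I (M.nabT T X Y)) ∧
    (∀ X Y, M.nabT T X (M.J Y) = M.J (M.nabT T X Y)) ∧
    (∀ X Y, M.nabT T X (M.K Y) = M.K (M.nabT T X Y))

/-- membership of a three-form in `KH`: type `{2,1}` for each `A` and `Λ_A ψ = 0` -/
def InKH3 (ψ : V → V → V → C) : Prop :=
  IsAlt3 ψ ∧ Lin3 ψ ∧
  calL M.I ψ = ψ ∧ calL M.J ψ = ψ ∧ calL M.K ψ = ψ ∧
  M.Lam M.I ψ = 0 ∧ M.Lam M.J ψ = 0 ∧ M.Lam M.K ψ = 0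

/-- the `(0,3)`-tensor of the `KH`-component of the torsion determined by `ψ^{(K)}`:
`3ψ - Σ_A A_(23) ψ` -/
def xiKH3 (ψ : V → V → V → C) : V → V → V → C := fun X Y Z =>
  (3:ℝ) • ψ X Y Z - (op23 M.I ψ X Y Z + op23 M.J ψ X Y Z + op23 M.K ψ X Y Z)

/-- the `(0,3)`-tensor of the `EH`-component of the torsion determined by the
one-form `θ`: `3 e_i ⊗ e_i ∧ θ - Σ_A (e_i ⊗ A e_i ∧ A θ + (2/n) A θ ⊗ ω_A)` -/
def xiEH3 (θ : V → C) : V → V → V → C := fun X Y Z =>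
  (3:ℝ) • ∑ i, M.g (M.frame i) X *
      (M.g (M.frame i) Y * θ Z - M.g (M.frame i) Z * θ Y)
  - ((∑ i, M.g (M.frame i) X *
        (M.g (M.I (M.frame i)) Y * act1 M.I θ Z - M.g (M.I (M.frame i)) Z * act1 M.I θ Y))
    + (∑ i, M.g (M.frame i) X *
        (M.g (M.J (M.frame i)) Y * act1 M.J θ Z - M.g (M.J (M.frame i)) Z * act1 M.J θ Y))
    + (∑ i, M.g (M.frame i) X *
        (M.g (M.K (M.frame i)) Y * act1 M.K θ Z - M.g (M.K (M.frame i)) Z * act1 M.K θ Y)))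
  - (2/(n:ℝ)) • (act1 M.I θ X * M.omega M.I Y Z + act1 M.J θ X * M.omega M.J Y Z
      + act1 M.K θ X * M.omega M.K Y Z)

/-- the intrinsic torsion lies in `(K+E)H`: it is the sum of a `KH`-tensor and an
`EH`-tensor as described in §3 of the paper -/
def inKEH : Prop :=
  ∃ (ψ : V → V → V → C) (θ : V → C), M.InKH3 ψ ∧ Lin1 θ ∧
    ∀ X Y Z, M.g Y (M.xi X Z) = M.xiKH3 ψ X Y Z + M.xiEH3 θ X Y Z

end derived

end AQH

/-! With `S A B (X) = ∑ⱼ g(X, (∇_{eⱼ} A)(B eⱼ))`, writing `dω_A` as the alternation of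
`∇ω_A` gives `Λ_B dω_A = ⟨∇ω_A, ω_B⟩ + S A B`. The pairing `⟨∇ω_A, ω_B⟩ = -½ tr (∇A ∘ B)` is
skew in `A`, `B` as soon as `AB + BA` is parallel, so it vanishes for `A = B` and is
antisymmetric on an adapted basis. The Leibniz rule for `∇(AB)` turns into
`S (AB) E = S A (BE) + A (S B E)`, and the quaternion relations then express every
`A (S B E)` with `A, B, E` distinct through `S I I`, `S J J`, `S K K`. -/

namespace AQH

theorem act1_add {C V : Type*} [CommRing C] (A : V → V) (μ ν : V → C) :
    act1 A (μ + ν) = act1 A μ + act1 A ν :=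
  funext fun _ => neg_add _ _

theorem act1_smul {C V : Type*} [CommRing C] [Algebra ℝ C] (A : V → V) (r : ℝ) (ν : V → C) :
    act1 A (r • ν) = r • act1 A ν :=
  funext fun X => (smul_neg r (ν (A X))).symm

theorem isLinearMap_of_map_smul_add {C V : Type*} [CommRing C] [AddCommGroup V] [Module C V]
    {A : V → V} (hA : ∀ (f : C) X Y, A (f • X + Y) = f • A X + A Y) : IsLinearMap C A := by
  have hzero : A 0 = 0 := by simpa using hA 1 0 0
  exact ⟨fun X Y => by simpa using hA 1 X Y, fun f X => by simpa [hzero] using hA f X 0⟩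

variable {n : ℕ} {C V : Type*} [CommRing C] [Algebra ℝ C] [AddCommGroup V] [Module C V]
variable (M : AQH n C V)

/-- The metric `g` as a Mathlib bilinear form, so that its algebra comes from the library. -/
def metric : LinearMap.BilinForm C V :=
  LinearMap.mk₂ C M.g M.g_add M.g_smul
    (fun X Y Z => by rw [M.g_symm, M.g_add, M.g_symm Y, M.g_symm Z])
    (fun f X Y => by rw [M.g_symm, M.g_smul, M.g_symm Y, smul_eq_mul])

theorem g_neg_right (X Y : V) : M.g X (-Y) = -M.g X Y := map_neg (M.metric X) Y

theorem g_add_right (X Y Z : V) : M.g X (Y + Z) = M.g X Y + M.g X Z := map_add (M.metric X) Y Z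

theorem g_sub_right (X Y Z : V) : M.g X (Y - Z) = M.g X Y - M.g X Z := map_sub (M.metric X) Y Z

theorem g_sub_left (X Y Z : V) : M.g (X - Y) Z = M.g X Z - M.g Y Z := M.metric.map_sub₂ X Y Z

theorem g_sum_smul_left {ι : Type*} [Fintype ι] (c : ι → C) (v : ι → V) (Y : V) :
    M.g (∑ i, c i • v i) Y = ∑ i, c i * M.g (v i) Y :=
  (map_sum (M.metric.flip Y) _ _).trans
    (Finset.sum_congr rfl fun i _ => M.g_smul (c i) (v i) Y)

section Frame

theorem g_sum_smul_frame (c : Fin (4 * n) → C) (j : Fin (4 * n)) :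
    M.g (∑ i, c i • M.frame i) (M.frame j) = c j := by
  simp [g_sum_smul_left, M.frame_orthonormal]

/-- The orthonormal frame as a Mathlib basis, with coordinates `X ↦ g(X, eᵢ)`. -/
def frameBasis : Module.Basis (Fin (4 * n)) C V :=
  .ofEquivFun
    { toFun := fun X i => M.g X (M.frame i)
      map_add' := fun X Y => funext fun _ => M.g_add X Y _
      map_smul' := fun f X => funext fun _ => M.g_smul f X _
      invFun := fun c => ∑ i, c i • M.frame i
      left_inv := fun X => (M.frame_span X).symm
      right_inv := fun c => funext (M.g_sum_smul_frame c) }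

theorem frameBasis_apply (i : Fin (4 * n)) : M.frameBasis i = M.frame i := by
  simp [frameBasis, Module.Basis.coe_ofEquivFun]

theorem trace_eq_sum_g_frame (P : Module.End C V) :
    LinearMap.trace C V P = ∑ i, M.g (M.frame i) (P (M.frame i)) := by
  rw [LinearMap.trace_eq_matrix_trace C M.frameBasis, Matrix.trace]
  refine Finset.sum_congr rfl fun i _ => ?_
  rw [Matrix.diag_apply, LinearMap.toMatrix_apply, frameBasis_apply, M.g_symm]
  rfl

theorem sum_g_frame_mul_g_frame (X Y : V) :
    ∑ i, M.g X (M.frame i) * M.g (M.frame i) Y = M.g X Y := by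
  rw [← g_sum_smul_left, ← M.frame_span X]

end Frame

section SkewAdjoint

variable {M}

theorem isSkewAdjoint_of_sq_of_isometry {A : V → V} (hsq : ∀ X, A (A X) = -X)
    (hg : ∀ X Y, M.g (A X) (A Y) = M.g X Y) : M.metric.IsSkewAdjoint A := fun X Y => by
  have h := hg X (A Y)
  rw [hsq, g_neg_right] at h
  calc M.g (A X) Y = -M.g X (A Y) := by rw [← h, neg_neg]
    _ = M.g X (-A Y) := (M.g_neg_right X (A Y)).symm

theorem g_apply_left {A : V → V} (hA : M.metric.IsSkewAdjoint A) (X Y : V) :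
    M.g (A X) Y = -M.g X (A Y) :=
  (hA X Y).trans (M.g_neg_right X (A Y))

theorem omega_swap {A : V → V} (hA : M.metric.IsSkewAdjoint A) (X Y : V) :
    M.omega A X Y = -M.omega A Y X := by
  rw [omega, omega, M.g_symm, g_apply_left hA]

theorem sum_omega_mul_omega {P : Module.End C V} (hP : M.metric.IsSkewAdjoint P)
    (Q : Module.End C V) (X Y : V) :
    ∑ i, M.omega P X (M.frame i) * M.omega Q (M.frame i) Y = M.omega (P * Q) X Y := by
  calc ∑ i, M.omega P X (M.frame i) * M.omega Q (M.frame i) Y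
      = -∑ i, M.g (P X) (M.frame i) * M.g (M.frame i) (Q Y) := by
        simp only [g_apply_left hP, neg_mul, Finset.sum_neg_distrib, neg_neg, omega]
    _ = M.omega (P * Q) X Y := by
        rw [sum_g_frame_mul_g_frame, g_apply_left hP, neg_neg]; rfl

theorem inner2_omega {P : Module.End C V} (hP : M.metric.IsSkewAdjoint P) (Q : Module.End C V) :
    M.inner2 (M.omega P) (M.omega Q) = -(1/2 : ℝ) • LinearMap.trace C V (P * Q) := by
  have hsum (j : Fin (4 * n)) :
      ∑ i, M.omega P (M.frame i) (M.frame j) * M.omega Q (M.frame i) (M.frame j)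
        = -M.omega (P * Q) (M.frame j) (M.frame j) := by
    simp only [omega_swap hP _ (M.frame j), neg_mul, Finset.sum_neg_distrib, sum_omega_mul_omega hP]
  rw [inner2, Finset.sum_comm, M.trace_eq_sum_g_frame]
  simp only [hsum, Finset.sum_neg_distrib, smul_neg, neg_smul]
  rfl

end SkewAdjoint

section CovariantDerivative

/-- The covariant derivative `A ↦ ∇_X A` on `C`-linear endomorphisms; `nabA` is its evaluation. -/
def nablaEnd (X : V) : Module.End C V →+ Module.End C V :=
  AddMonoidHom.mk'
    (fun A =>
      { toFun := M.nabA A X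
        map_add' := fun Y Z => by simp only [nabA, map_add, M.nab_add]; abel
        map_smul' := fun f Y => by
          simp only [nabA, map_smul, M.nab_leibniz, map_add, RingHom.id_apply]; module })
    (fun A B => LinearMap.ext fun Y => by
      simp only [LinearMap.coe_mk, AddHom.coe_mk, LinearMap.add_apply, nabA, M.nab_add]; abel)

theorem nablaEnd_apply (A : Module.End C V) (X Y : V) :
    M.nablaEnd X A Y = M.nab X (A Y) - A (M.nab X Y) := rfl

theorem nablaEnd_mul (A B : Module.End C V) (X : V) :
    M.nablaEnd X (A * B) = M.nablaEnd X A * B + A * M.nablaEnd X B := by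
  ext Y
  simp only [nablaEnd_apply, Module.End.mul_apply, LinearMap.add_apply, map_sub]
  abel

theorem nablaEnd_one (X : V) : M.nablaEnd X 1 = 0 := by
  ext Y
  simp only [nablaEnd_apply, Module.End.one_apply, sub_self, LinearMap.zero_apply]

theorem nab2_omega (A : Module.End C V) (X : V) :
    M.nab2 (M.omega A) X = M.omega (M.nablaEnd X A) := by
  funext Y Z
  simp only [nab2, omega, nablaEnd_apply, M.nab_metric, g_sub_right]
  ring

theorem d2_eq_alternation_nab2 {ψ : V → V → C} (hsub : ∀ X Y Z, ψ (X - Y) Z = ψ X Z - ψ Y Z)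
    (hswap : ∀ X Y, ψ X Y = -ψ Y X) (X Y Z : V) :
    M.d2 ψ X Y Z = M.nab2 ψ X Y Z - M.nab2 ψ Y X Z + M.nab2 ψ Z X Y := by
  simp only [d2, nab2, ← M.torsion_free, hsub]
  linear_combination hswap (M.nab X Z) Y - hswap (M.nab Y Z) X + hswap (M.nab Z Y) X

variable {M}

theorem isSkewAdjoint_nablaEnd {A : Module.End C V} (hA : M.metric.IsSkewAdjoint A) (X : V) :
    M.metric.IsSkewAdjoint (M.nablaEnd X A) := fun Y Z => by
  have hD : M.D X (M.g (A Y) Z) + M.D X (M.g Y (A Z)) = 0 := by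
    rw [← M.D_add, g_apply_left hA, neg_add_cancel]
    simpa only [map_zero] using M.D_const X 0
  rw [M.nab_metric, M.nab_metric] at hD
  change M.g (M.nablaEnd X A Y) Z = M.g Y (-M.nablaEnd X A Z)
  simp only [g_neg_right, nablaEnd_apply, g_sub_left, g_sub_right]
  linear_combination hD - g_apply_left hA (M.nab X Y) Z - g_apply_left hA Y (M.nab X Z)

theorem d2_omega {A : Module.End C V} (hA : M.metric.IsSkewAdjoint A) (X Y Z : V) :
    M.d2 (M.omega A) X Y Z = M.omega (M.nablaEnd X A) Y Z - M.omega (M.nablaEnd Y A) X Z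
      + M.omega (M.nablaEnd Z A) X Y := by
  rw [M.d2_eq_alternation_nab2 (fun X Y Z => M.g_sub_left X Y (A Z)) (omega_swap hA)]
  simp only [nab2_omega]

end CovariantDerivative

section KahlerForms

/-- The one-form `X ↦ ⟨∇_X ω_A, ω_B⟩`. -/
def nablaOmegaInner (A B : V → V) : V → C := fun X => M.inner2 (M.nab2 (M.omega A) X) (M.omega B)

/-- The one-form `λ_I` of the adapted basis `I, A, B`; cyclically `λ_J` and `λ_K`. -/
def lambdaForm (A B : V → V) : V → C := (1 / (2 * (n : ℝ))) • M.nablaOmegaInner A B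

/-- The one-form `X ↦ ∑ⱼ g(X, (∇_{eⱼ} A)(B eⱼ))`, the codifferential of `ω_A` with `B` inserted:
for `B = 1` it is `d*ω_A`. -/
def twistedCodiff (A B : Module.End C V) : V → C := fun X =>
  ∑ j, M.omega (M.nablaEnd (M.frame j) A * B) X (M.frame j)

theorem twistedCodiff_neg_left (A B : Module.End C V) :
    M.twistedCodiff (-A) B = -M.twistedCodiff A B := by
  funext X
  simp only [twistedCodiff, map_neg, neg_mul, omega, LinearMap.neg_apply, g_neg_right,
    Finset.sum_neg_distrib, Pi.neg_apply]

theorem twistedCodiff_neg_right (A B : Module.End C V) :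
    M.twistedCodiff A (-B) = -M.twistedCodiff A B := by
  funext X
  simp only [twistedCodiff, mul_neg, omega, LinearMap.neg_apply, g_neg_right,
    Finset.sum_neg_distrib, Pi.neg_apply]

theorem two_mul_smul_lambdaForm (A B : V → V) :
    (2 * (n : ℝ)) • M.lambdaForm A B = M.nablaOmegaInner A B := by
  rcases eq_or_ne n 0 with rfl | hn
  · have : IsEmpty (Fin (4 * 0)) := Fin.isEmpty
    funext X
    simp [nablaOmegaInner, inner2]
  · rw [lambdaForm, smul_smul, mul_one_div_cancel (by positivity), one_smul]

variable {M}

theorem twistedCodiff_mul {A : Module.End C V} (hA : M.metric.IsSkewAdjoint A)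
    (B E : Module.End C V) :
    M.twistedCodiff (A * B) E = M.twistedCodiff A (B * E) + act1 A (M.twistedCodiff B E) := by
  funext X
  simp only [twistedCodiff, act1, omega, Pi.add_apply, ← Finset.sum_neg_distrib,
    ← Finset.sum_add_distrib, nablaEnd_mul, add_mul, mul_assoc, LinearMap.add_apply, g_add_right,
    g_apply_left hA, neg_neg, Module.End.mul_apply]

theorem Lam_d2_omega {A B : Module.End C V} (hA : M.metric.IsSkewAdjoint A)
    (hB : M.metric.IsSkewAdjoint B) :
    M.Lam B (M.d2 (M.omega A)) = M.nablaOmegaInner A B + M.twistedCodiff A B := by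
  funext X
  have hcodiff : ∑ i, ∑ j, M.omega (M.nablaEnd (M.frame j) A) X (M.frame i) *
      M.omega B (M.frame i) (M.frame j) = M.twistedCodiff A B X := by
    rw [Finset.sum_comm]
    exact Finset.sum_congr rfl fun j _ => sum_omega_mul_omega (isSkewAdjoint_nablaEnd hA _) B _ _
  have hcodiff' : ∑ i, ∑ j, M.omega (M.nablaEnd (M.frame i) A) X (M.frame j) *
      M.omega B (M.frame i) (M.frame j) = -M.twistedCodiff A B X := by
    rw [← hcodiff, Finset.sum_comm]
    simp only [← Finset.sum_neg_distrib]
    refine Finset.sum_congr rfl fun i _ => Finset.sum_congr rfl fun j _ => ?_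
    rw [omega_swap hB, mul_neg]
  simp only [Lam, nablaOmegaInner, inner2, nab2_omega, d2_omega hA, add_mul, sub_mul,
    Finset.sum_add_distrib, Finset.sum_sub_distrib, hcodiff, hcodiff', Pi.add_apply]
  module

theorem nablaOmegaInner_eq_trace {A : Module.End C V} (hA : M.metric.IsSkewAdjoint A)
    (B : Module.End C V) (X : V) :
    M.nablaOmegaInner A B X = -(1/2 : ℝ) • LinearMap.trace C V (M.nablaEnd X A * B) := by
  rw [nablaOmegaInner, nab2_omega, inner2_omega (isSkewAdjoint_nablaEnd hA X)]

theorem nablaOmegaInner_add_swap {A B : Module.End C V} (hA : M.metric.IsSkewAdjoint A)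
    (hB : M.metric.IsSkewAdjoint B) (hparallel : ∀ X, M.nablaEnd X (A * B + B * A) = 0) :
    M.nablaOmegaInner A B + M.nablaOmegaInner B A = 0 := by
  funext X
  have htrace : (2 : ℝ) • (LinearMap.trace C V (M.nablaEnd X A * B) +
      LinearMap.trace C V (M.nablaEnd X B * A)) = 0 := by
    have h := congrArg (LinearMap.trace C V) (hparallel X)
    simp only [map_add, nablaEnd_mul, map_zero, LinearMap.trace_mul_comm C A,
      LinearMap.trace_mul_comm C B] at h
    rw [two_smul, ← h]
    ring
  rw [Pi.add_apply, nablaOmegaInner_eq_trace hA, nablaOmegaInner_eq_trace hB, ← smul_add,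
    (smul_eq_zero_iff_right two_ne_zero).1 htrace, smul_zero, Pi.zero_apply]

end KahlerForms

section AdaptedBasis

/-- A triple of orthogonal almost complex structures with `K = IJ = -JI`: an adapted basis of the
quaternionic bundle. The corresponding properties of `K` follow, see `IsAdaptedBasis.rotate`. -/
structure IsAdaptedBasis (I J K : Module.End C V) : Prop where
  sq_I : I * I = -1
  sq_J : J * J = -1
  mul_IJ : I * J = K
  mul_JI : J * I = -K
  isometry_I : ∀ X Y, M.g (I X) (I Y) = M.g X Y
  isometry_J : ∀ X Y, M.g (J X) (J Y) = M.g X Y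

namespace IsAdaptedBasis

variable {M} {I J K : Module.End C V}

theorem rotate (h : M.IsAdaptedBasis I J K) : M.IsAdaptedBasis J K I := by
  have hJK : J * K = I := by
    rw [← neg_eq_iff_eq_neg.2 h.mul_JI, mul_neg, ← mul_assoc, h.sq_J, neg_one_mul, neg_neg]
  refine ⟨h.sq_J, ?_, hJK, ?_, h.isometry_J, fun X Y => ?_⟩
  · rw [← h.mul_IJ, mul_assoc, h.mul_IJ, hJK, h.sq_I]
  · rw [← h.mul_IJ, mul_assoc, h.sq_J, mul_neg_one]
  · rw [← h.mul_IJ, Module.End.mul_apply, Module.End.mul_apply, h.isometry_I, h.isometry_J]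

theorem isSkewAdjoint (h : M.IsAdaptedBasis I J K) : M.metric.IsSkewAdjoint I :=
  isSkewAdjoint_of_sq_of_isometry (LinearMap.congr_fun h.sq_I) h.isometry_I

theorem nablaOmegaInner_self (h : M.IsAdaptedBasis I J K) : M.nablaOmegaInner I I = 0 := by
  have htwo : M.nablaOmegaInner I I + M.nablaOmegaInner I I = 0 :=
    nablaOmegaInner_add_swap h.isSkewAdjoint h.isSkewAdjoint fun X => by
      simp only [h.sq_I, map_add, map_neg, nablaEnd_one, neg_zero, add_zero]
  rw [← two_smul ℝ] at htwo
  exact (smul_eq_zero_iff_right two_ne_zero).1 htwo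

theorem nablaOmegaInner_antisymm (h : M.IsAdaptedBasis I J K) :
    M.nablaOmegaInner I J + M.nablaOmegaInner J I = 0 :=
  nablaOmegaInner_add_swap h.isSkewAdjoint h.rotate.isSkewAdjoint fun X => by
    rw [h.mul_IJ, h.mul_JI, add_neg_cancel, map_zero]

theorem Lam_d2_omega_self (h : M.IsAdaptedBasis I J K) :
    M.Lam I (M.d2 (M.omega I)) = M.twistedCodiff I I := by
  rw [Lam_d2_omega h.isSkewAdjoint h.isSkewAdjoint, h.nablaOmegaInner_self, zero_add]

theorem act1_I_twistedCodiff_JK (h : M.IsAdaptedBasis I J K) :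
    act1 I (M.twistedCodiff J K) = M.twistedCodiff K K - M.twistedCodiff I I := by
  have hmul := twistedCodiff_mul h.isSkewAdjoint J K
  rw [h.mul_IJ, h.rotate.mul_IJ] at hmul
  rw [hmul, add_sub_cancel_left]

theorem act1_J_twistedCodiff_IK (h : M.IsAdaptedBasis I J K) :
    act1 J (M.twistedCodiff I K) = M.twistedCodiff J J - M.twistedCodiff K K := by
  have hmul := twistedCodiff_mul h.rotate.isSkewAdjoint I K
  rw [h.mul_JI, h.rotate.rotate.mul_JI, twistedCodiff_neg_left, twistedCodiff_neg_right] at hmul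
  linear_combination -hmul

theorem act1_J_Lam_add (h : M.IsAdaptedBasis I J K) :
    act1 J (M.Lam K (M.d2 (M.omega I))) + act1 J (M.Lam I (M.d2 (M.omega K)))
      = M.Lam I (M.d2 (M.omega I)) - M.Lam K (M.d2 (M.omega K)) := by
  have hI := h.isSkewAdjoint
  have hK := h.rotate.rotate.isSkewAdjoint
  have hpair : act1 J (M.nablaOmegaInner I K) + act1 J (M.nablaOmegaInner K I) = 0 := by
    rw [← act1_add, add_comm, h.rotate.rotate.nablaOmegaInner_antisymm]
    exact funext fun _ => neg_zero
  rw [Lam_d2_omega hI hK, Lam_d2_omega hK hI, act1_add, act1_add, h.Lam_d2_omega_self,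
    h.rotate.rotate.Lam_d2_omega_self]
  linear_combination hpair + h.act1_J_twistedCodiff_IK + h.rotate.act1_I_twistedCodiff_JK

theorem two_mul_smul_act1_lambdaForm_eq_add_sub (h : M.IsAdaptedBasis I J K) :
    (2 * (n : ℝ)) • act1 I (M.lambdaForm J K)
      = act1 I (M.Lam K (M.d2 (M.omega J))) + M.Lam I (M.d2 (M.omega I))
        - M.Lam K (M.d2 (M.omega K)) := by
  rw [← act1_smul, two_mul_smul_lambdaForm, Lam_d2_omega h.rotate.isSkewAdjoint
    h.rotate.rotate.isSkewAdjoint, act1_add, h.act1_I_twistedCodiff_JK, h.Lam_d2_omega_self,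
    h.rotate.rotate.Lam_d2_omega_self]
  abel

theorem two_mul_smul_act1_lambdaForm_eq_add_add (h : M.IsAdaptedBasis I J K) :
    (2 * (n : ℝ)) • act1 I (M.lambdaForm J K)
      = act1 I (M.Lam K (M.d2 (M.omega J))) + act1 J (M.Lam K (M.d2 (M.omega I)))
        + act1 J (M.Lam I (M.d2 (M.omega K))) := by
  rw [h.two_mul_smul_act1_lambdaForm_eq_add_sub, add_assoc, h.act1_J_Lam_add, add_sub_assoc]

end IsAdaptedBasis

/-- The almost complex structure `I` as a `C`-linear endomorphism. -/
def endI : Module.End C V := (isLinearMap_of_map_smul_add M.I_lin).mk' M.I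

/-- The almost complex structure `J` as a `C`-linear endomorphism. -/
def endJ : Module.End C V := (isLinearMap_of_map_smul_add M.J_lin).mk' M.J

/-- The almost complex structure `K` as a `C`-linear endomorphism. -/
def endK : Module.End C V := (isLinearMap_of_map_smul_add M.K_lin).mk' M.K

theorem isAdaptedBasis : M.IsAdaptedBasis M.endI M.endJ M.endK where
  sq_I := LinearMap.ext M.I_sq
  sq_J := LinearMap.ext M.J_sq
  mul_IJ := LinearMap.ext fun X => (M.K_def X).symm
  mul_JI := LinearMap.ext fun X => eq_neg_of_add_eq_zero_left <| by
    change M.J (M.I X) + M.K X = 0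
    rw [M.K_def, M.anticomm, add_neg_cancel]
  isometry_I := M.I_metric
  isometry_J := M.J_metric

end AdaptedBasis

end AQH

open AQH in
/-- On an almost quaternion-Hermitian `4n`-manifold, for any
local adapted basis `I, J, K`:
`2n Iλ_I = IΛ_K dω_J + JΛ_K dω_I + JΛ_I dω_K = IΛ_K dω_J + Λ_I dω_I - Λ_K dω_K`,
together with the formulas obtained by cyclic permutation of `(I, J, K)`. -/
theorem statement4 {n : ℕ} {C V : Type*} [CommRing C] [Algebra ℝ C] [AddCommGroup V]
    [Module C V] [Module ℝ V] [IsScalarTower ℝ C V] (M : AQH n C V) :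
    -- the formula for I λ_I
    ((2*(n:ℝ)) • act1 M.I M.lambdaI
      = act1 M.I (M.Lam M.K (M.d2 (M.omega M.J)))
        + act1 M.J (M.Lam M.K (M.d2 (M.omega M.I)))
        + act1 M.J (M.Lam M.I (M.d2 (M.omega M.K)))) ∧
    ((2*(n:ℝ)) • act1 M.I M.lambdaI
      = act1 M.I (M.Lam M.K (M.d2 (M.omega M.J)))
        + M.Lam M.I (M.d2 (M.omega M.I))
        - M.Lam M.K (M.d2 (M.omega M.K))) ∧
    -- the formula for J λ_J (cyclic permutation I → J → K → I)
    ((2*(n:ℝ)) • act1 M.J M.lambdaJ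
      = act1 M.J (M.Lam M.I (M.d2 (M.omega M.K)))
        + act1 M.K (M.Lam M.I (M.d2 (M.omega M.J)))
        + act1 M.K (M.Lam M.J (M.d2 (M.omega M.I)))) ∧
    ((2*(n:ℝ)) • act1 M.J M.lambdaJ
      = act1 M.J (M.Lam M.I (M.d2 (M.omega M.K)))
        + M.Lam M.J (M.d2 (M.omega M.J))
        - M.Lam M.I (M.d2 (M.omega M.I))) ∧
    -- the formula for K λ_K
    ((2*(n:ℝ)) • act1 M.K M.lambdaK
      = act1 M.K (M.Lam M.J (M.d2 (M.omega M.I)))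
        + act1 M.I (M.Lam M.J (M.d2 (M.omega M.K)))
        + act1 M.I (M.Lam M.K (M.d2 (M.omega M.J)))) ∧
    ((2*(n:ℝ)) • act1 M.K M.lambdaK
      = act1 M.K (M.Lam M.J (M.d2 (M.omega M.I)))
        + M.Lam M.K (M.d2 (M.omega M.K))
        - M.Lam M.J (M.d2 (M.omega M.J))) := by
  have hIJK := M.isAdaptedBasis
  have hJKI := hIJK.rotate
  have hKIJ := hJKI.rotate
  exact ⟨hIJK.two_mul_smul_act1_lambdaForm_eq_add_add,
    hIJK.two_mul_smul_act1_lambdaForm_eq_add_sub,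
    hJKI.two_mul_smul_act1_lambdaForm_eq_add_add,
    hJKI.two_mul_smul_act1_lambdaForm_eq_add_sub,
    hKIJ.two_mul_smul_act1_lambdaForm_eq_add_add,
    hKIJ.two_mul_smul_act1_lambdaForm_eq_add_sub⟩
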